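/- Let G be a fixed labelled (t+1)-partite multigraph pattern as in the model below, and consider the random multigraph 𝒢 = 𝒢(n_0,n,t,k,p) with n_0 = n_0(n). Suppose that Φ_G^v → ∞ as n → ∞. Then there is a constant c > 0 (depending only on G) such that with probability 1 − O(1/Φ_G^v) we have D_G ≥ c·Φ_G^v, where D_G is the maximum size of a set of pairwise vertex-disjoint good copies of G in 𝒢. -/

import Mathlib

open Filter

namespace PartiteModel

/-- Labels of the `2k` parallel edges between `V₀` and the other classes:
`(l, true)` stands for the label `l+1 ∈ [k]`, `(l, false)` for the label `-(l+1) ∈ [-k]`. -/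
abbrev Lab (k : ℕ) := Fin k × Bool

/-- A vertex in one of the classes `V₁, …, V_t` (each a copy of `Fin n`). -/
abbrev SideV (n t : ℕ) := Fin t × Fin n

/-- The edge slots of the complete `(t+1)`-partite multigraph `K`: labelled edges
between `V₀` and the side classes, and (simple) edges among side vertices. -/
abbrev EdgeSlot (n₀ n t k : ℕ) := (Fin n₀ × SideV n t × Lab k) ⊕ Sym2 (SideV n t)

/-- An outcome of the random multigraph `𝒢(n₀,n,t,k,p)`: for each edge slot of `K`,
whether the corresponding edge is present. -/
abbrev Omega (n₀ n t k : ℕ) := EdgeSlot n₀ n t k → Bool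

/-- The probability of the outcome `ω`, each edge being present independently with
probability `p`. -/
noncomputable def wgt (n₀ n t k : ℕ) (p : ℝ) (ω : Omega n₀ n t k) : ℝ :=
  p ^ (Finset.univ.filter fun e => ω e = true).card *
    (1 - p) ^ (Finset.univ.filter fun e => ω e = false).card

/-- Expectation of a random variable on `𝒢(n₀,n,t,k,p)`. -/
noncomputable def expec (n₀ n t k : ℕ) (p : ℝ) (X : Omega n₀ n t k → ℝ) : ℝ :=
  ∑ ω : Omega n₀ n t k, wgt n₀ n t k p ω * X ω

/-- Variance of a random variable on `𝒢(n₀,n,t,k,p)`. -/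
noncomputable def variance (n₀ n t k : ℕ) (p : ℝ) (X : Omega n₀ n t k → ℝ) : ℝ :=
  expec n₀ n t k p (fun ω => (X ω - expec n₀ n t k p X) ^ 2)

open scoped Classical in
/-- Probability of an event on `𝒢(n₀,n,t,k,p)`. -/
noncomputable def prOmega (n₀ n t k : ℕ) (p : ℝ) (S : Omega n₀ n t k → Prop) : ℝ :=
  ∑ ω : Omega n₀ n t k, if S ω then wgt n₀ n t k p ω else 0

/-- A `(t+1)`-partite multigraph pattern `G` with vertex classes
`Y₀ = Fin m0` and `Y_i = Fin (m i)`; `e0` is its set of labelled edges between `Y₀` and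
the side classes (so between a fixed pair of vertices there are at most `2k` such edges,
with distinct labels), and `e1` is its set of (simple) edges between two distinct side
classes. -/
structure Pattern (t k : ℕ) where
  m0 : ℕ
  m : Fin t → ℕ
  e0 : Finset (Fin m0 × Σ i : Fin t, Fin (m i) × Lab k)
  e1 : Finset (Sym2 (Σ i : Fin t, Fin (m i)))
  nodiag : ∀ e ∈ e1, ¬ (Sym2.map Sigma.fst e).IsDiag

variable {t k : ℕ}

/-- A candidate placement of the pattern `G` in the host `K`: a map of each vertex
class of `G` into the corresponding class of `K`. -/
structure CopyMap (G : Pattern t k) (n₀ n : ℕ) where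
  f0 : Fin G.m0 → Fin n₀
  f : (i : Fin t) → Fin (G.m i) → Fin n

/-- `c` is a good copy of the pattern `G` in the outcome `ω`: it is injective on every
vertex class, and every (labelled) edge of `G` is mapped to an edge present in `ω`. -/
def IsGoodCopy {n₀ n : ℕ} (G : Pattern t k) (ω : Omega n₀ n t k)
    (c : CopyMap G n₀ n) : Prop :=
  Function.Injective c.f0 ∧ (∀ i, Function.Injective (c.f i)) ∧
  (∀ z ∈ G.e0,
    ω (Sum.inl (c.f0 z.1, (z.2.1, c.f z.2.1 z.2.2.1), z.2.2.2)) = true) ∧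
  (∀ e ∈ G.e1,
    ω (Sum.inr (Sym2.map (fun y : Σ i : Fin t, Fin (G.m i) => (y.1, c.f y.1 y.2)) e))
      = true)

/-- `X_G`: the number of good copies of `G` in the outcome `ω`. -/
noncomputable def XG (G : Pattern t k) (n₀ n : ℕ) (ω : Omega n₀ n t k) : ℝ :=
  (Set.ncard {c : CopyMap G n₀ n | IsGoodCopy G ω c} : ℝ)

/-- A subgraph `G'` of the pattern `G`: a choice of vertex subsets of each class of `G`
together with a subset of those edges of `G` whose endvertices lie in the chosen sets. -/
structure Subpattern (G : Pattern t k) where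
  s0 : Finset (Fin G.m0)
  s : (i : Fin t) → Finset (Fin (G.m i))
  f0 : Finset (Fin G.m0 × Σ i : Fin t, Fin (G.m i) × Lab k)
  f1 : Finset (Sym2 (Σ i : Fin t, Fin (G.m i)))
  f0sub : f0 ⊆ G.e0
  f1sub : f1 ⊆ G.e1
  f0mem : ∀ z ∈ f0, z.1 ∈ s0 ∧ z.2.2.1 ∈ s z.2.1
  f1mem : ∀ e ∈ f1, ∀ y ∈ e, y.2 ∈ s y.1

/-- A candidate placement of the subpattern `H` in the host `K`. -/
structure SubCopyMap {G : Pattern t k} (H : Subpattern G) (n₀ n : ℕ) where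
  f0 : {a // a ∈ H.s0} → Fin n₀
  f : (i : Fin t) → {b // b ∈ H.s i} → Fin n

/-- `c` is a good copy of the subpattern `H` in the outcome `ω`. -/
def IsGoodSubCopy {n₀ n : ℕ} {G : Pattern t k} (H : Subpattern G)
    (ω : Omega n₀ n t k) (c : SubCopyMap H n₀ n) : Prop :=
  Function.Injective c.f0 ∧ (∀ i, Function.Injective (c.f i)) ∧
  (∀ z, ∀ hz : z ∈ H.f0,
    ω (Sum.inl (c.f0 ⟨z.1, (H.f0mem z hz).1⟩,
        (z.2.1, c.f z.2.1 ⟨z.2.2.1, (H.f0mem z hz).2⟩), z.2.2.2)) = true) ∧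
  (∀ e ∈ H.f1, ∀ x y : Σ i : Fin t, Fin (G.m i), e = s(x, y) →
    ∀ (hx : x.2 ∈ H.s x.1) (hy : y.2 ∈ H.s y.1),
      ω (Sum.inr s((x.1, c.f x.1 ⟨x.2, hx⟩), (y.1, c.f y.1 ⟨y.2, hy⟩))) = true)

/-- `X_{G'}`: the number of good copies of the subpattern `H` in the outcome `ω`. -/
noncomputable def XSub {G : Pattern t k} (H : Subpattern G) (n₀ n : ℕ)
    (ω : Omega n₀ n t k) : ℝ :=
  (Set.ncard {c : SubCopyMap H n₀ n | IsGoodSubCopy H ω c} : ℝ)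

/-- `Φ_G := min { E(X_{G'}) : G' ⊆ G, e_{G'} > 0 }`. -/
noncomputable def Phi (n₀ n : ℕ) (p : ℝ) (G : Pattern t k) : ℝ :=
  sInf {x : ℝ | ∃ H : Subpattern G, (H.f0.Nonempty ∨ H.f1.Nonempty) ∧
    x = expec n₀ n t k p (XSub H n₀ n)}

/-- `Φ_G^v := min { E(X_{G'}) : G' ⊆ G, v_{G'} > 0 }`. -/
noncomputable def PhiV (n₀ n : ℕ) (p : ℝ) (G : Pattern t k) : ℝ :=
  sInf {x : ℝ | ∃ H : Subpattern G, (H.s0.Nonempty ∨ ∃ i, (H.s i).Nonempty) ∧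
    x = expec n₀ n t k p (XSub H n₀ n)}

/-- Two copies of `G` are vertex-disjoint. -/
def DisjointCopies {n₀ n : ℕ} {G : Pattern t k} (c c' : CopyMap G n₀ n) : Prop :=
  (∀ a a', c.f0 a ≠ c'.f0 a') ∧ ∀ i b b', c.f i b ≠ c'.f i b'

/-- `D_G`: the maximum size of a set of pairwise vertex-disjoint good copies of `G`
in the outcome `ω`. -/
noncomputable def DG (G : Pattern t k) (n₀ n : ℕ) (ω : Omega n₀ n t k) : ℕ :=
  sSup {d : ℕ | ∃ F : Fin d → CopyMap G n₀ n,
    (∀ i, IsGoodCopy G ω (F i)) ∧ ∀ i i', i ≠ i' → DisjointCopies (F i) (F i')}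

end PartiteModel

namespace PartiteModel

section lattice
variable {α : Type*} [DecidableEq α]

lemma mod_prod (m : α → ℝ) (A B : Finset α) :
    (∏ x ∈ A ∪ B, m x) * (∏ x ∈ A ∩ B, m x) = (∏ x ∈ A, m x) * ∏ x ∈ B, m x :=
  Finset.prod_union_inter

/-- every nonempty closed subset of `c` has weight at least `Φ` -/
def Heavy (m : α → ℝ) (Cl : Finset α → Prop) (Φ : ℝ) (c : Finset α) : Prop :=
  Cl c ∧ ∀ S, S ⊆ c → Cl S → S.Nonempty → Φ ≤ ∏ x ∈ S, m x

variable {m : α → ℝ} {Cl : Finset α → Prop} {Φ : ℝ}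

lemma lat1 (hm : ∀ x, 0 ≤ m x) (hi : ∀ A B, Cl A → Cl B → Cl (A ∩ B))
    {c₁ c₂ : Finset α} (h₁ : Heavy m Cl Φ c₁) (h₂ : Heavy m Cl Φ c₂)
    (hne : (c₁ ∩ c₂).Nonempty) :
    (∏ x ∈ c₁ ∪ c₂, m x) * Φ ≤ (∏ x ∈ c₁, m x) * ∏ x ∈ c₂, m x := by
  rw [← mod_prod]
  exact mul_le_mul_of_nonneg_left
    (h₁.2 _ Finset.inter_subset_left (hi _ _ h₁.1 h₂.1) hne)
    (Finset.prod_nonneg fun x _ => hm x)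

lemma lat2 (hm : ∀ x, 0 ≤ m x) (hi : ∀ A B, Cl A → Cl B → Cl (A ∩ B))
    (hu : ∀ A B, Cl A → Cl B → Cl (A ∪ B)) (hΦ : 1 ≤ Φ)
    {c₁ c₂ F : Finset α} (h₁ : Heavy m Cl Φ c₁) (h₂ : Heavy m Cl Φ c₂)
    (hne : (c₁ ∩ c₂).Nonempty) (hF : F ⊆ c₁ ∪ c₂) (hFc : Cl F) (hFne : F.Nonempty) :
    Φ ^ 3 ≤ (∏ x ∈ F, m x) * (∏ x ∈ c₁ ∩ c₂, m x) ^ 2 := by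
  have hH : Cl (c₁ ∩ c₂) := hi _ _ h₁.1 h₂.1
  have hMH := h₁.2 _ Finset.inter_subset_left hH hne
  have hF12 : F = F ∩ c₁ ∪ F ∩ c₂ := by
    rw [← Finset.inter_union_distrib_left, Finset.inter_eq_left.2 hF]
  have nn : ∀ S : Finset α, 0 ≤ ∏ x ∈ S, m x := fun S => Finset.prod_nonneg fun x _ => hm x
  by_cases hE : (F ∩ (c₁ ∩ c₂)).Nonempty
  · have a1 : Φ ≤ ∏ x ∈ (F ∩ c₁) ∪ (c₁ ∩ c₂), m x :=
      h₁.2 _ (by intro x; simp; tauto) (hu _ _ (hi _ _ hFc h₁.1) hH)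
        (hne.mono Finset.subset_union_right)
    have a2 : Φ ≤ ∏ x ∈ (F ∩ c₂) ∪ (c₁ ∩ c₂), m x :=
      h₂.2 _ (by intro x; simp; tauto) (hu _ _ (hi _ _ hFc h₂.1) hH)
        (hne.mono Finset.subset_union_right)
    have a3 : Φ ≤ ∏ x ∈ F ∩ (c₁ ∩ c₂), m x :=
      h₁.2 _ (by intro x; simp; tauto) (hi _ _ hFc hH) hE
    have e1 := mod_prod m F (c₁ ∩ c₂)
    have e2 := mod_prod m ((F ∩ c₁) ∪ (c₁ ∩ c₂)) ((F ∩ c₂) ∪ (c₁ ∩ c₂))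
    have r1 : ((F ∩ c₁) ∪ (c₁ ∩ c₂)) ∪ ((F ∩ c₂) ∪ (c₁ ∩ c₂)) = F ∪ (c₁ ∩ c₂) := by
      ext x; have := @hF x; simp at this ⊢; tauto
    have r2 : ((F ∩ c₁) ∪ (c₁ ∩ c₂)) ∩ ((F ∩ c₂) ∪ (c₁ ∩ c₂)) = c₁ ∩ c₂ := by
      ext x; simp; tauto
    rw [r1, r2] at e2
    have : (∏ x ∈ F, m x) * (∏ x ∈ c₁ ∩ c₂, m x) ^ 2
      = ((∏ x ∈ (F ∩ c₁) ∪ (c₁ ∩ c₂), m x) * (∏ x ∈ (F ∩ c₂) ∪ (c₁ ∩ c₂), m x))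
        * ∏ x ∈ F ∩ (c₁ ∩ c₂), m x := by
      rw [← e2, pow_two, ← mul_assoc, ← e1]; ring
    rw [this]
    calc Φ ^ 3 = (Φ * Φ) * Φ := by ring
      _ ≤ _ := by
        apply mul_le_mul (mul_le_mul a1 a2 (by linarith) (nn _)) a3 (by linarith)
        exact mul_nonneg (nn _) (nn _)
  · have key : Φ ≤ ∏ x ∈ F, m x := by
      have e1 := mod_prod m (F ∩ c₁) (F ∩ c₂)
      have r : (F ∩ c₁) ∩ (F ∩ c₂) = ∅ := by
        rw [Finset.not_nonempty_iff_eq_empty] at hE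
        rw [← hE]; ext x; simp; tauto
      rw [← hF12, r, Finset.prod_empty, mul_one] at e1
      rw [e1]
      have b1 : (F ∩ c₁).Nonempty → Φ ≤ ∏ x ∈ F ∩ c₁, m x := fun h =>
        h₁.2 _ Finset.inter_subset_right (hi _ _ hFc h₁.1) h
      have b2 : (F ∩ c₂).Nonempty → Φ ≤ ∏ x ∈ F ∩ c₂, m x := fun h =>
        h₂.2 _ Finset.inter_subset_right (hi _ _ hFc h₂.1) h
      rcases (F ∩ c₁).eq_empty_or_nonempty with h | h
      · rw [h] at hF12 ⊢
        rw [Finset.empty_union] at hF12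
        rw [Finset.prod_empty, one_mul]
        exact b2 (hF12 ▸ hFne)
      · rcases (F ∩ c₂).eq_empty_or_nonempty with h' | h'
        · rw [h', Finset.prod_empty, mul_one]; exact b1 h
        · nlinarith [b1 h, b2 h']
    calc Φ ^ 3 = Φ * Φ ^ 2 := by ring
      _ ≤ _ := by
        apply mul_le_mul key (pow_le_pow_left₀ (by linarith) hMH 2) (by positivity) (nn _)

lemma lat3 (hm : ∀ x, 0 ≤ m x) (hi : ∀ A B, Cl A → Cl B → Cl (A ∩ B))
    (hu : ∀ A B, Cl A → Cl B → Cl (A ∪ B)) (hΦ : 1 ≤ Φ)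
    {c₁ c₂ c₃ c₄ : Finset α} (h₁ : Heavy m Cl Φ c₁) (h₂ : Heavy m Cl Φ c₂)
    (h₃ : Heavy m Cl Φ c₃) (h₄ : Heavy m Cl Φ c₄) {μ : ℝ}
    (e₁ : ∏ x ∈ c₁, m x = μ) (e₂ : ∏ x ∈ c₂, m x = μ) (e₃ : ∏ x ∈ c₃, m x = μ)
    (e₄ : ∏ x ∈ c₄, m x = μ)
    (hne : (c₁ ∩ c₂).Nonempty) (hne' : (c₃ ∩ c₄).Nonempty)
    (hne'' : ((c₁ ∪ c₂) ∩ (c₃ ∪ c₄)).Nonempty) :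
    (∏ x ∈ (c₁ ∪ c₂) ∪ (c₃ ∪ c₄), m x) * Φ ^ 3 ≤ μ ^ 4 := by
  have nn : ∀ S : Finset α, 0 ≤ ∏ x ∈ S, m x := fun S => Finset.prod_nonneg fun x _ => hm x
  have hFc : Cl ((c₁ ∪ c₂) ∩ (c₃ ∪ c₄)) := hi _ _ (hu _ _ h₁.1 h₂.1) (hu _ _ h₃.1 h₄.1)
  have k1 := lat2 hm hi hu hΦ h₁ h₂ hne Finset.inter_subset_left hFc hne''
  have k2 := lat2 hm hi hu hΦ h₃ h₄ hne' Finset.inter_subset_right hFc hne''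
  have m1 := mod_prod m c₁ c₂
  have m2 := mod_prod m c₃ c₄
  have m3 := mod_prod m (c₁ ∪ c₂) (c₃ ∪ c₄)
  rw [e₁, e₂] at m1
  rw [e₃, e₄] at m2
  set F := ∏ x ∈ (c₁ ∪ c₂) ∩ (c₃ ∪ c₄), m x
  set H := ∏ x ∈ c₁ ∩ c₂, m x
  set H' := ∏ x ∈ c₃ ∩ c₄, m x
  have hp3 : (0:ℝ) ≤ Φ ^ 3 := by positivity
  have hk : Φ ^ 3 ≤ F * H * H' := by
    have : (Φ ^ 3) ^ 2 ≤ (F * H * H') ^ 2 := by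
      calc (Φ ^ 3) ^ 2 = Φ ^ 3 * Φ ^ 3 := by ring
        _ ≤ (F * H ^ 2) * (F * H' ^ 2) := mul_le_mul k1 k2 hp3 (by have := nn ((c₁ ∪ c₂) ∩ (c₃ ∪ c₄)); positivity)
        _ = _ := by ring
    exact le_of_sq_le_sq this (mul_nonneg (mul_nonneg (nn _) (nn _)) (nn _))
  calc _ ≤ (∏ x ∈ (c₁ ∪ c₂) ∪ (c₃ ∪ c₄), m x) * (F * H * H') :=
        mul_le_mul_of_nonneg_left hk (nn _)
    _ = ((∏ x ∈ (c₁ ∪ c₂) ∪ (c₃ ∪ c₄), m x) * F) * H * H' := by ring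
    _ = ((∏ x ∈ c₁ ∪ c₂, m x) * H) * ((∏ x ∈ c₃ ∪ c₄, m x) * H') := by rw [m3]; ring
    _ = μ ^ 4 := by rw [m1, m2]; ring
end lattice

section counting

/-- counting tuples by overlap pattern -/
lemma count_bound {I W A : Type*} [Fintype I] [DecidableEq I] [DecidableEq W]
    (sz : I → ℕ) (w : W → ℝ) (ι : (x : I) → Fin (sz x) → W)
    (hinj : ∀ x, Function.Injective (ι x)) (hw : ∀ x a, w (ι x a) = sz x)
    (hsz : ∀ x, 1 ≤ sz x) (J : Finset A) (T : A → (x : I) → Fin (sz x))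
    (hT : Set.InjOn T J) (q : A → ℝ) (B : ℝ)
    (hB : ∀ j ∈ J, (∏ v ∈ Finset.univ.image (fun x => ι x (T j x)), w v) * q j ≤ B)
    (hB0 : 0 ≤ B) :
    ∑ j ∈ J, q j ≤ (Fintype.card I : ℝ) ^ (Fintype.card I) * B := by
  classical
  -- representative map
  have hrep : ∀ φ : (x : I) → Fin (sz x), ∃ ρ : I → I,
      (∀ x, ι (ρ x) (φ (ρ x)) = ι x (φ x)) ∧
      (∀ x y, ι x (φ x) = ι y (φ y) → ρ x = ρ y) := by
    intro φ
    let f : I → W := fun x => ι x (φ x)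
    have : ∀ v : Set.range f, ∃ x, f x = v := fun v => v.2
    choose g hg using this
    exact ⟨fun x => g ⟨f x, x, rfl⟩, fun x => hg ⟨f x, x, rfl⟩, fun x y h => by
      have : (⟨f x, x, rfl⟩ : Set.range f) = ⟨f y, y, rfl⟩ := Subtype.ext h
      simp only [this]⟩
  choose rep hr1 hr2 using hrep
  have hfib : ∀ ρ : I → I, ∑ j ∈ J with rep (T j) = ρ, q j ≤ B := by
    intro ρ
    set P : ℝ := ∏ x ∈ Finset.univ.image ρ, (sz x : ℝ) with hP
    have hPpos : 0 < P := Finset.prod_pos fun x _ => by exact_mod_cast hsz x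
    have h1 : ∀ j ∈ J.filter (fun j => rep (T j) = ρ), q j ≤ B / P := by
      intro j hj
      rw [Finset.mem_filter] at hj
      obtain ⟨hj, rfl⟩ := hj
      rw [le_div_iff₀ hPpos, mul_comm]
      refine le_trans (le_of_eq ?_) (hB j hj)
      congr 1
      have : Finset.univ.image (fun x => ι x (T j x))
          = (Finset.univ.image (rep (T j))).image (fun x => ι x (T j x)) := by
        ext v
        simp only [Finset.mem_image, Finset.mem_univ, true_and, exists_exists_eq_and, hr1]
      rw [this, Finset.prod_image]
      · rw [hP]; exact Finset.prod_congr rfl fun x _ => (hw _ _).symm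
      · intro x hx y hy hxy
        simp only [Finset.coe_image, Finset.coe_univ, Set.image_univ, Set.mem_range] at hx hy
        obtain ⟨x, rfl⟩ := hx
        obtain ⟨y, rfl⟩ := hy
        simp only [hr1] at hxy
        exact hr2 _ _ _ hxy
    have h2 : ((J.filter (fun j => rep (T j) = ρ)).card : ℝ) ≤ P := by
      have : (J.filter (fun j => rep (T j) = ρ)).card
          ≤ (Finset.univ : Finset ((x : {x // x ∈ Finset.univ.image ρ}) → Fin (sz x))).card := by
        apply Finset.card_le_card_of_injOn (fun j (x : {x // x ∈ Finset.univ.image ρ}) => T j x) (fun _ _ => Finset.mem_univ _)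
        intro j hj j' hj' h
        simp only [Finset.coe_filter, Set.mem_ofPred_eq] at hj hj'
        apply hT hj.1 hj'.1
        funext x
        apply hinj x
        rw [← hr1 (T j) x, ← hr1 (T j') x, hj.2, hj'.2]
        have := congrFun h ⟨ρ x, by simp⟩
        simp only at this
        rw [this]
      rw [Finset.card_univ, Fintype.card_pi] at this
      simp only [Fintype.card_fin] at this
      have e : P = ((∏ x : {x // x ∈ Finset.univ.image ρ}, sz x : ℕ) : ℝ) := by
        rw [hP, ← Finset.prod_coe_sort]; push_cast; rfl
      rw [e]; exact_mod_cast this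
    calc _ ≤ ∑ j ∈ J.filter (fun j => rep (T j) = ρ), B / P := Finset.sum_le_sum h1
      _ = (J.filter (fun j => rep (T j) = ρ)).card * (B / P) := by simp
      _ ≤ P * (B / P) := mul_le_mul_of_nonneg_right h2 (div_nonneg hB0 hPpos.le)
      _ = B := by field_simp
  calc ∑ j ∈ J, q j = ∑ ρ : I → I, ∑ j ∈ J with rep (T j) = ρ, q j :=
        (Finset.sum_fiberwise J (fun j => rep (T j)) q).symm
    _ ≤ ∑ ρ : I → I, B := Finset.sum_le_sum fun ρ _ => hfib ρ
    _ = _ := by simp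

/-- a large independent set -/
lemma indep_bound {A : Type*} [DecidableEq A] (X : Finset A) (R : A → A → Prop)
    (hrefl : ∀ a, R a a) (hsymm : ∀ a b, R a b → R b a) [DecidableRel R] :
    ∃ I ⊆ X, (∀ a ∈ I, ∀ b ∈ I, a ≠ b → ¬ R a b) ∧
      (X.card : ℝ) ^ 2 ≤ 4 * I.card * ((X ×ˢ X).filter fun z => R z.1 z.2).card := by
  set N := ((X ×ˢ X).filter fun z => R z.1 z.2).card with hN
  let deg : A → ℕ := fun a => (X.filter (R a)).card
  have hNs : N = ∑ a ∈ X, deg a := by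
    rw [hN, Finset.card_filter, Finset.sum_product]
    exact Finset.sum_congr rfl fun a _ => (Finset.card_filter _ _).symm
  set B := X.filter (fun a => deg a * X.card ≤ 2 * N) with hBdef
  -- at least half
  have hhalf : X.card ≤ 2 * B.card := by
    rcases Nat.eq_zero_or_pos X.card with h0 | h0
    · omega
    have hc : B.card + (X.filter (fun a => ¬ deg a * X.card ≤ 2 * N)).card = X.card :=
      Finset.card_filter_add_card_filter_not _
    set B' := X.filter (fun a => ¬ deg a * X.card ≤ 2 * N)
    have h1 : B'.card * (2 * N + 1) ≤ ∑ a ∈ B', deg a * X.card := by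
      rw [← smul_eq_mul]
      apply Finset.card_nsmul_le_sum
      intro a ha
      have := (Finset.mem_filter.1 ha).2
      omega
    have h2 : ∑ a ∈ B', deg a * X.card ≤ N * X.card := by
      rw [hNs, Finset.sum_mul]
      exact Finset.sum_le_sum_of_subset (Finset.filter_subset _ _)
    by_contra hlt
    push Not at hlt
    have h3 : X.card + 1 ≤ 2 * B'.card := by omega
    nlinarith
  obtain ⟨I, hI⟩ := (B.powerset.filter (fun I => ∀ a ∈ I, ∀ b ∈ I, a ≠ b → ¬ R a b)).exists_maximal
    ⟨∅, by simp⟩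
  have hI1 := hI.prop
  rw [Finset.mem_filter, Finset.mem_powerset] at hI1
  refine ⟨I, hI1.1.trans (Finset.filter_subset _ _), hI1.2, ?_⟩
  have hcov : B ⊆ I.biUnion (fun a => X.filter (R a)) := by
    intro b hb
    rw [Finset.mem_biUnion]
    by_contra hno
    push Not at hno
    have hno' : ∀ a ∈ I, ¬ R a b := fun a ha hab =>
      hno a ha (Finset.mem_filter.2 ⟨(Finset.mem_filter.1 hb).1, hab⟩)
    have hbI : b ∉ I := fun h => hno' b h (hrefl b)
    have : insert b I ≤ I := by
      apply hI.2
      · rw [Finset.mem_filter, Finset.mem_powerset]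
        refine ⟨Finset.insert_subset hb hI1.1, ?_⟩
        intro x hx y hy hxy
        rcases Finset.mem_insert.1 hx with hx | hx <;> rcases Finset.mem_insert.1 hy with hy | hy
        · exact absurd (hx.trans hy.symm) hxy
        · rw [hx]; exact fun h => hno' y hy (hsymm _ _ h)
        · rw [hy]; exact hno' x hx
        · exact hI1.2 x hx y hy hxy
      · exact Finset.subset_insert _ _
    exact hbI (this (Finset.mem_insert_self _ _))
  have h1 : B.card ≤ ∑ a ∈ I, deg a := (Finset.card_le_card hcov).trans Finset.card_biUnion_le
  have h2 : ∑ a ∈ I, deg a * X.card ≤ I.card * (2 * N) := by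
    rw [← smul_eq_mul]
    exact Finset.sum_le_card_nsmul _ _ _ fun a ha => (Finset.mem_filter.1 (hI1.1 ha)).2
  rw [← Finset.sum_mul] at h2
  have h3 : X.card ^ 2 ≤ 4 * I.card * N := by
    calc X.card ^ 2 = X.card * X.card := by ring
      _ ≤ 2 * B.card * X.card := Nat.mul_le_mul_right _ hhalf
      _ ≤ 2 * (∑ a ∈ I, deg a) * X.card := by gcongr
      _ = 2 * ((∑ a ∈ I, deg a) * X.card) := by ring
      _ ≤ 2 * (I.card * (2 * N)) := by gcongr
      _ = _ := by ring
  exact_mod_cast h3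
end counting

end PartiteModel
namespace PartiteModel

section prob
variable {n₀ n t k : ℕ} {p : ℝ}

lemma wgt_eq (ω : Omega n₀ n t k) :
    wgt n₀ n t k p ω = ∏ e, (if ω e = true then p else 1 - p) := by
  rw [wgt, Finset.prod_ite, Finset.prod_const, Finset.prod_const]
  simp

lemma wgt_nonneg (h0 : 0 ≤ p) (h1 : p ≤ 1) (ω : Omega n₀ n t k) : 0 ≤ wgt n₀ n t k p ω :=
  mul_nonneg (pow_nonneg h0 _) (pow_nonneg (by linarith) _)

/-- indicator that all edges in `S` are present -/
def ind (S : Finset (EdgeSlot n₀ n t k)) (ω : Omega n₀ n t k) : ℝ :=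
  if ∀ e ∈ S, ω e = true then 1 else 0

lemma ind_mul (S T : Finset (EdgeSlot n₀ n t k)) (ω : Omega n₀ n t k) :
    ind S ω * ind T ω = ind (S ∪ T) ω := by
  simp only [ind, Finset.mem_union, or_imp, forall_and]
  split_ifs <;> simp_all

lemma expec_ind (S : Finset (EdgeSlot n₀ n t k)) :
    expec n₀ n t k p (ind S) = p ^ S.card := by
  classical
  have h : ∀ ω : Omega n₀ n t k, wgt n₀ n t k p ω * ind S ω
      = ∏ e, (if ω e = true then p else if e ∈ S then 0 else 1 - p) := by
    intro ω
    rw [wgt_eq, ind]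
    split_ifs with hh
    · rw [mul_one]
      apply Finset.prod_congr rfl
      intro e _
      by_cases he : e ∈ S
      · simp [hh e he]
      · simp [he]
    · push Not at hh
      obtain ⟨e, he, hne⟩ := hh
      rw [mul_zero, eq_comm]
      apply Finset.prod_eq_zero (Finset.mem_univ e)
      simp [he, hne]
  rw [expec]
  simp only [h]
  have := (Finset.prod_univ_sum (ι := EdgeSlot n₀ n t k) (κ := fun _ => Bool)
    (fun _ => Finset.univ) (fun e b => if b = true then p else if e ∈ S then 0 else 1 - p))
  rw [Fintype.piFinset_univ] at this
  rw [← this]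
  simp only [Fintype.sum_bool]
  refine (Finset.prod_congr rfl (fun e _ => ?_)).trans (b := ∏ e, if e ∈ S then p else 1) ?_
  · by_cases he : e ∈ S <;> simp [he]
  rw [Finset.prod_ite_mem, Finset.univ_inter,
    Finset.prod_const]

lemma expec_one : expec n₀ n t k p (fun _ => 1) = 1 := by
  have := expec_ind (n₀ := n₀) (n := n) (t := t) (k := k) (p := p) ∅
  simpa [ind, funext_iff, expec] using this

lemma expec_sum {A : Type*} (J : Finset A) (f : A → Omega n₀ n t k → ℝ) :
    expec n₀ n t k p (fun ω => ∑ j ∈ J, f j ω) = ∑ j ∈ J, expec n₀ n t k p (f j) := by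
  simp only [expec, Finset.mul_sum]
  exact Finset.sum_comm

lemma expec_add (f g : Omega n₀ n t k → ℝ) :
    expec n₀ n t k p (fun ω => f ω + g ω) = expec n₀ n t k p f + expec n₀ n t k p g := by
  simp only [expec, mul_add, Finset.sum_add_distrib]

lemma expec_smul (a : ℝ) (f : Omega n₀ n t k → ℝ) :
    expec n₀ n t k p (fun ω => a * f ω) = a * expec n₀ n t k p f := by
  simp only [expec, Finset.mul_sum]
  exact Finset.sum_congr rfl fun _ _ => by ring

lemma expec_mono (h0 : 0 ≤ p) (h1 : p ≤ 1) {f g : Omega n₀ n t k → ℝ} (h : ∀ ω, f ω ≤ g ω) :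
    expec n₀ n t k p f ≤ expec n₀ n t k p g :=
  Finset.sum_le_sum fun ω _ => mul_le_mul_of_nonneg_left (h ω) (wgt_nonneg h0 h1 ω)

lemma pr_ge (h0 : 0 ≤ p) (h1 : p ≤ 1) (S : Omega n₀ n t k → Prop) (Z : Omega n₀ n t k → ℝ)
    (hZ0 : ∀ ω, 0 ≤ Z ω) (hZ : ∀ ω, ¬ S ω → 1 ≤ Z ω) :
    1 - expec n₀ n t k p Z ≤ prOmega n₀ n t k p S := by
  classical
  have : expec n₀ n t k p (fun _ => 1) ≤ prOmega n₀ n t k p S + expec n₀ n t k p Z := by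
    rw [expec, expec, prOmega, ← Finset.sum_add_distrib]
    apply Finset.sum_le_sum
    intro ω _
    have hw := wgt_nonneg h0 h1 ω
    by_cases hS : S ω
    · simp only [hS, if_true]
      nlinarith [hZ0 ω]
    · simp only [hS, if_false]
      nlinarith [hZ ω hS]
  rw [expec_one] at this
  linarith

lemma var_bound (h0 : 0 ≤ p) {A : Type*} (J : Finset A)
    (s : A → Finset (EdgeSlot n₀ n t k)) [DecidableEq A] :
    expec n₀ n t k p (fun ω => (∑ j ∈ J, ind (s j) ω - ∑ j ∈ J, p ^ (s j).card) ^ 2)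
      ≤ ∑ z ∈ (J ×ˢ J).filter (fun z => (s z.1 ∩ s z.2).Nonempty), p ^ (s z.1 ∪ s z.2).card := by
  have e1 : ∀ ω : Omega n₀ n t k,
      (∑ j ∈ J, ind (s j) ω - ∑ j ∈ J, p ^ (s j).card) ^ 2
      = ∑ z ∈ J ×ˢ J, (ind (s z.1 ∪ s z.2) ω + ((- p ^ (s z.2).card) * ind (s z.1) ω
          + ((- p ^ (s z.1).card) * ind (s z.2) ω
          + (p ^ (s z.1).card * p ^ (s z.2).card) * 1))) := by
    intro ω
    rw [← Finset.sum_sub_distrib, pow_two, Finset.sum_mul_sum, ← Finset.sum_product']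
    apply Finset.sum_congr rfl
    intro z _
    rw [← ind_mul]; ring
  simp only [e1]
  rw [expec_sum, Finset.sum_filter]
  apply Finset.sum_le_sum
  intro z _
  rw [expec_add, expec_add, expec_add, expec_smul, expec_smul, expec_smul, expec_one,
    expec_ind, expec_ind, expec_ind]
  split_ifs with h
  · have := mul_nonneg (pow_nonneg h0 (s z.1).card) (pow_nonneg h0 (s z.2).card)
    linarith
  · rw [Finset.not_nonempty_iff_eq_empty, ← Finset.disjoint_iff_inter_eq_empty] at h
    rw [Finset.card_union_of_disjoint h, pow_add]
    linarith

lemma sum_ind {A : Type*} (J : Finset A) (s : A → Finset (EdgeSlot n₀ n t k))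
    (ω : Omega n₀ n t k) (P : A → Prop) [DecidablePred P] (hP : ∀ j, P j ↔ ∀ e ∈ s j, ω e = true) :
    ∑ j ∈ J, ind (s j) ω = ((J.filter P).card : ℝ) := by
  rw [Finset.card_filter]
  push_cast
  apply Finset.sum_congr rfl
  intro j _
  rw [ind]
  by_cases h : P j
  · rw [if_pos h, if_pos ((hP j).1 h)]
  · rw [if_neg h, if_neg (fun h' => h ((hP j).2 h'))]

end prob

end PartiteModel
namespace PartiteModel

section geom
variable {t k : ℕ} {G : Pattern t k} {n₀ n : ℕ}

abbrev PV (G : Pattern t k) := Fin G.m0 ⊕ (Σ i : Fin t, Fin (G.m i))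
abbrev PE (G : Pattern t k) :=
  (Fin G.m0 × Σ i : Fin t, Fin (G.m i) × Lab k) ⊕ Sym2 (Σ i : Fin t, Fin (G.m i))
abbrev HV (n₀ n t : ℕ) := Fin n₀ ⊕ SideV n t

instance : DecidableEq (HV n₀ n t) := inferInstance
instance : DecidableEq (EdgeSlot n₀ n t k) := inferInstance
instance instDecItem : DecidableEq (HV n₀ n t ⊕ EdgeSlot n₀ n t k) := instDecidableEqSum

def smap (f : (i : Fin t) → Fin (G.m i) → Fin n) : (Σ i : Fin t, Fin (G.m i)) → SideV n t :=
  fun y => (y.1, f y.1 y.2)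

def vmap (c : CopyMap G n₀ n) : PV G → HV n₀ n t := Sum.map c.f0 (smap c.f)

def emap (c : CopyMap G n₀ n) : PE G → EdgeSlot n₀ n t k :=
  Sum.map (fun z => (c.f0 z.1, (z.2.1, c.f z.2.1 z.2.2.1), z.2.2.2)) (Sym2.map (smap c.f))

def edgesG (G : Pattern t k) : Finset (PE G) := G.e0.disjSum G.e1

def vs (c : CopyMap G n₀ n) : Finset (HV n₀ n t) := Finset.univ.image (vmap c)
def es (c : CopyMap G n₀ n) : Finset (EdgeSlot n₀ n t k) := (edgesG G).image (emap c)
def items (c : CopyMap G n₀ n) : Finset (HV n₀ n t ⊕ EdgeSlot n₀ n t k) :=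
  (vs c).disjSum (es c)

def CInj (c : CopyMap G n₀ n) : Prop :=
  Function.Injective c.f0 ∧ ∀ i, Function.Injective (c.f i)

def wv (n₀ n t : ℕ) : HV n₀ n t → ℝ := Sum.elim (fun _ => (n₀ : ℝ)) (fun _ => (n : ℝ))
def wm (n₀ n t k : ℕ) (p : ℝ) : HV n₀ n t ⊕ EdgeSlot n₀ n t k → ℝ :=
  Sum.elim (wv n₀ n t) (fun _ => p)

def Clo (S : Finset (HV n₀ n t ⊕ EdgeSlot n₀ n t k)) : Prop :=
  (∀ a b l, Sum.inr (Sum.inl (a, b, l)) ∈ S → Sum.inl (Sum.inl a) ∈ S ∧ Sum.inl (Sum.inr b) ∈ S) ∧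
  (∀ e, Sum.inr (Sum.inr e) ∈ S → ∀ y ∈ e, Sum.inl (Sum.inr y) ∈ S)

lemma Clo.inter (A B : Finset (HV n₀ n t ⊕ EdgeSlot n₀ n t k)) (hA : Clo A) (hB : Clo B) :
    Clo (A ∩ B) := by
  constructor
  · intro a b l h
    rw [Finset.mem_inter] at h
    have h1 := hA.1 a b l h.1
    have h2 := hB.1 a b l h.2
    simp [h1, h2]
  · intro e h y hy
    rw [Finset.mem_inter] at h ⊢
    exact ⟨hA.2 e h.1 y hy, hB.2 e h.2 y hy⟩

lemma Clo.union (A B : Finset (HV n₀ n t ⊕ EdgeSlot n₀ n t k)) (hA : Clo A) (hB : Clo B) :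
    Clo (A ∪ B) := by
  constructor
  · intro a b l h
    rw [Finset.mem_union] at h
    rcases h with h | h
    · have h1 := hA.1 a b l h
      simp [h1]
    · have h1 := hB.1 a b l h
      simp [h1]
  · intro e h y hy
    rw [Finset.mem_union] at h ⊢
    rcases h with h | h
    · exact Or.inl (hA.2 e h y hy)
    · exact Or.inr (hB.2 e h y hy)

lemma Clo_items (c : CopyMap G n₀ n) : Clo (items c) := by
  constructor
  · intro a b l h
    simp only [items, es, edgesG, Finset.inr_mem_disjSum, Finset.mem_image, emap] at h
    obtain ⟨x, hx, hxe⟩ := h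
    rcases x with z | e
    · simp only [Sum.map_inl, Sum.inl.injEq, Prod.mk.injEq] at hxe
      obtain ⟨h1, h2, h3⟩ := hxe
      simp only [items, vs, Finset.inl_mem_disjSum, Finset.mem_image, Finset.mem_univ, true_and]
      refine ⟨⟨Sum.inl z.1, ?_⟩, ⟨Sum.inr ⟨z.2.1, z.2.2.1⟩, ?_⟩⟩
      · simp [vmap, h1]
      · simp [vmap, smap, h2]
    · simp at hxe
  · intro e h y hy
    simp only [items, es, edgesG, Finset.inr_mem_disjSum, Finset.mem_image, emap] at h
    obtain ⟨x, hx, hxe⟩ := h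
    rcases x with z | e'
    · simp at hxe
    · simp only [Sum.map_inr, Sum.inr.injEq] at hxe
      subst hxe
      rw [Sym2.mem_map] at hy
      obtain ⟨u, hu, rfl⟩ := hy
      simp only [items, vs, Finset.inl_mem_disjSum, Finset.mem_image, Finset.mem_univ, true_and]
      exact ⟨Sum.inr u, by simp [vmap]⟩

lemma good_iff (ω : Omega n₀ n t k) (c : CopyMap G n₀ n) :
    IsGoodCopy G ω c ↔ CInj c ∧ ∀ e ∈ es c, ω e = true := by
  simp only [IsGoodCopy, CInj, es, edgesG, Finset.forall_mem_image, and_assoc]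
  constructor
  · rintro ⟨h1, h2, h3, h4⟩
    refine ⟨h1, h2, ?_⟩
    rintro (z | e) hx
    · exact h3 z (Finset.inl_mem_disjSum.1 hx)
    · exact h4 e (Finset.inr_mem_disjSum.1 hx)
  · rintro ⟨h1, h2, h3⟩
    exact ⟨h1, h2, fun z hz => h3 (Finset.inl_mem_disjSum.2 hz),
      fun e he => h3 (Finset.inr_mem_disjSum.2 he)⟩

lemma smap_inj {f : (i : Fin t) → Fin (G.m i) → Fin n} (hf : ∀ i, Function.Injective (f i)) :
    Function.Injective (smap f) := by
  rintro ⟨i, b⟩ ⟨j, b'⟩ h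
  simp only [smap, Prod.mk.injEq] at h
  obtain ⟨rfl, h⟩ := h
  rw [hf i h]

def gmap (c : CopyMap G n₀ n) : PV G ⊕ PE G → HV n₀ n t ⊕ EdgeSlot n₀ n t k :=
  Sum.map (vmap c) (emap c)

lemma vmap_inj {c : CopyMap G n₀ n} (hc : CInj c) : Function.Injective (vmap c) :=
  hc.1.sumMap (smap_inj hc.2)

lemma emap_inj {c : CopyMap G n₀ n} (hc : CInj c) : Function.Injective (emap c) := by
  apply Function.Injective.sumMap _ (Sym2.map.injective (smap_inj hc.2))
  rintro ⟨a, i, b, l⟩ ⟨a', i', b', l'⟩ h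
  simp only [Prod.mk.injEq] at h
  obtain ⟨h1, ⟨rfl, h2⟩, rfl⟩ := h
  rw [hc.1 h1, hc.2 _ h2]

lemma items_eq (c : CopyMap G n₀ n) :
    items c = (Finset.univ.disjSum (edgesG G)).image (gmap c) := by
  ext (x | x) <;> simp [items, vs, es, gmap]

/-- weight of the sub-item set -/
lemma prod_sub {c : CopyMap G n₀ n} (hc : CInj c) (p : ℝ)
    {S : Finset (HV n₀ n t ⊕ EdgeSlot n₀ n t k)} (hS : S ⊆ items c) :
    ∏ x ∈ S, wm n₀ n t k p x =
      (n₀ : ℝ) ^ (Finset.univ.filter fun a => Sum.inl (Sum.inl (c.f0 a)) ∈ S).card *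
      (∏ i, (n : ℝ) ^ (Finset.univ.filter fun b => Sum.inl (Sum.inr (i, c.f i b)) ∈ S).card) *
      (p ^ (G.e0.filter fun z => Sum.inr (emap c (Sum.inl z)) ∈ S).card *
       p ^ (G.e1.filter fun e => Sum.inr (emap c (Sum.inr e)) ∈ S).card) := by
  classical
  set A0 := (Finset.univ.filter fun a => Sum.inl (Sum.inl (c.f0 a)) ∈ S) with hA0
  set A1 : (i : Fin t) → Finset (Fin (G.m i)) :=
    fun i => (Finset.univ.filter fun b => Sum.inl (Sum.inr (i, c.f i b)) ∈ S) with hA1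
  set E0 := (G.e0.filter fun z => Sum.inr (emap c (Sum.inl z)) ∈ S) with hE0
  set E1 := (G.e1.filter fun e => Sum.inr (emap c (Sum.inr e)) ∈ S) with hE1
  have hSeq : S = ((A0.disjSum (Finset.univ.sigma A1)).disjSum (E0.disjSum E1)).image (gmap c) := by
    ext x
    constructor
    · intro hx
      have := hS hx
      rw [items_eq, Finset.mem_image] at this
      obtain ⟨y, hy, rfl⟩ := this
      rw [Finset.mem_image]
      refine ⟨y, ?_, rfl⟩
      rcases y with (a | b) | (z | e)
      · exact Finset.inl_mem_disjSum.2 (Finset.inl_mem_disjSum.2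
          (Finset.mem_filter.2 ⟨Finset.mem_univ _, hx⟩))
      · exact Finset.inl_mem_disjSum.2 (Finset.inr_mem_disjSum.2
          (Finset.mem_sigma.2 ⟨Finset.mem_univ _, Finset.mem_filter.2 ⟨Finset.mem_univ _, hx⟩⟩))
      · simp only [Finset.inr_mem_disjSum, edgesG, Finset.inl_mem_disjSum] at hy ⊢
        exact Finset.mem_filter.2 ⟨hy, hx⟩
      · simp only [Finset.inr_mem_disjSum, edgesG] at hy ⊢
        exact Finset.mem_filter.2 ⟨hy, hx⟩
    · intro hx
      rw [Finset.mem_image] at hx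
      obtain ⟨y, hy, rfl⟩ := hx
      rcases y with (a | b) | (z | e)
      · exact (Finset.mem_filter.1 (Finset.inl_mem_disjSum.1 (Finset.inl_mem_disjSum.1 hy))).2
      · exact (Finset.mem_filter.1 (Finset.mem_sigma.1
          (Finset.inr_mem_disjSum.1 (Finset.inl_mem_disjSum.1 hy))).2).2
      · simp only [Finset.inr_mem_disjSum, Finset.inl_mem_disjSum] at hy
        exact (Finset.mem_filter.1 hy).2
      · simp only [Finset.inr_mem_disjSum] at hy
        exact (Finset.mem_filter.1 hy).2
  conv_lhs => rw [hSeq]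
  have hgi : Function.Injective (gmap c) := (vmap_inj hc).sumMap (emap_inj hc)
  rw [Finset.prod_image hgi.injOn]
  rw [Finset.prod_disjSum, Finset.prod_disjSum, Finset.prod_disjSum]
  simp only [gmap, wm, wv, vmap, emap, Sum.map_inl, Sum.map_inr, Sum.elim_inl, Sum.elim_inr,
    Finset.prod_const, Finset.card_sigma, Finset.prod_pow_eq_pow_sum]
  rfl

instance : Fintype (CopyMap G n₀ n) := Fintype.ofEquiv
  ((Fin G.m0 → Fin n₀) × ((i : Fin t) → Fin (G.m i) → Fin n))
  { toFun := fun x => ⟨x.1, x.2⟩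
    invFun := fun c => (c.f0, c.f)
    left_inv := fun _ => rfl
    right_inv := fun _ => rfl }

instance {H : Subpattern G} : Fintype (SubCopyMap H n₀ n) := Fintype.ofEquiv
  (({a // a ∈ H.s0} → Fin n₀) × ((i : Fin t) → {b // b ∈ H.s i} → Fin n))
  { toFun := fun x => ⟨x.1, x.2⟩
    invFun := fun c => (c.f0, c.f)
    left_inv := fun _ => rfl
    right_inv := fun _ => rfl }

lemma card_subcopy (H : Subpattern G) :
    Fintype.card (SubCopyMap H n₀ n) = n₀ ^ H.s0.card * ∏ i, n ^ (H.s i).card := by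
  rw [Fintype.ofEquiv_card, Fintype.card_prod, Fintype.card_pi, Fintype.card_pi]
  simp

lemma expec_XSub_le {p : ℝ} (h0 : 0 ≤ p) (h1 : p ≤ 1) (hn₀ : 1 ≤ n₀) (hn : 1 ≤ n)
    (H : Subpattern G) :
    expec n₀ n t k p (XSub H n₀ n) ≤
      (n₀ : ℝ) ^ H.s0.card * (∏ i, (n : ℝ) ^ (H.s i).card) * (p ^ H.f0.card * p ^ H.f1.card) := by
  classical
  -- extension of a placement to all vertices
  let x0 (c : SubCopyMap H n₀ n) : Fin G.m0 → Fin n₀ :=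
    fun a => if h : a ∈ H.s0 then c.f0 ⟨a, h⟩ else ⟨0, hn₀⟩
  let x1 (c : SubCopyMap H n₀ n) : (i : Fin t) → Fin (G.m i) → Fin n :=
    fun i b => if h : b ∈ H.s i then c.f i ⟨b, h⟩ else ⟨0, hn⟩
  let ex (c : SubCopyMap H n₀ n) : CopyMap G n₀ n := ⟨x0 c, x1 c⟩
  let I (c : SubCopyMap H n₀ n) : Prop :=
    Function.Injective c.f0 ∧ ∀ i, Function.Injective (c.f i)
  let ed (c : SubCopyMap H n₀ n) : Finset (EdgeSlot n₀ n t k) :=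
    (H.f0.disjSum H.f1).image (emap (ex c))
  have hgood : ∀ c ω, IsGoodSubCopy H ω c → I c ∧ ∀ e ∈ ed c, ω e = true := by
    rintro c ω ⟨g1, g2, g3, g4⟩
    refine ⟨⟨g1, g2⟩, ?_⟩
    simp only [ed, Finset.forall_mem_image]
    rintro (z | e) hx
    · have hz := Finset.inl_mem_disjSum.1 hx
      have := g3 z hz
      have m1 := H.f0mem z hz
      simpa [emap, ex, x0, x1, m1.1, m1.2] using this
    · have he := Finset.inr_mem_disjSum.1 hx
      induction e using Sym2.ind with
      | _ u v =>
      have mu := H.f1mem _ he u (by simp)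
      have mv := H.f1mem _ he v (by simp)
      have := g4 _ he u v rfl mu mv
      simpa [emap, ex, x1, smap, mu, mv] using this
  have hcard : ∀ c, I c → (ed c).card = H.f0.card + H.f1.card := by
    rintro c ⟨i0, i1⟩
    rw [Finset.card_image_of_injOn, Finset.card_disjSum]
    have hs : ∀ u v : (Σ i : Fin t, Fin (G.m i)), u.2 ∈ H.s u.1 → v.2 ∈ H.s v.1 →
        smap (x1 c) u = smap (x1 c) v → u = v := by
      rintro ⟨i, b⟩ ⟨j, b'⟩ hu hv h
      simp only [smap, Prod.mk.injEq] at h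
      obtain ⟨rfl, h⟩ := h
      simp only at hu hv
      simp only [x1, hu, hv, dif_pos] at h
      have := i1 _ h
      simp only [Subtype.mk.injEq] at this
      rw [this]
    rintro (z | e) hx (z' | e') hx' h
    · have hz := H.f0mem z (Finset.inl_mem_disjSum.1 hx)
      have hz' := H.f0mem z' (Finset.inl_mem_disjSum.1 hx')
      obtain ⟨a, i, b, l⟩ := z
      obtain ⟨a', i', b', l'⟩ := z'
      simp only [emap, Sum.map_inl, Sum.inl.injEq, Prod.mk.injEq, ex] at h
      obtain ⟨e1, e2, rfl⟩ := h
      simp only at hz hz'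
      simp only [x0, hz.1, hz'.1, dif_pos] at e1
      have e5 : a = a' := congrArg Subtype.val (i0 e1)
      have e3 := hs ⟨i, b⟩ ⟨i', b'⟩ hz.2 hz'.2 (by simp [smap, e2])
      cases e3
      rw [e5]
    · simp [emap] at h
    · simp [emap] at h
    · have he := H.f1mem e (Finset.inr_mem_disjSum.1 hx)
      have he' := H.f1mem e' (Finset.inr_mem_disjSum.1 hx')
      simp only [emap, Sum.map_inr, Sum.inr.injEq, ex] at h
      congr 1
      induction e using Sym2.ind with
      | _ u v =>
      induction e' using Sym2.ind with
      | _ u' v' =>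
      simp only [Sym2.map_mk, Sym2.eq_iff] at h ⊢
      have a1 := he u (by simp)
      have a2 := he v (by simp)
      have a3 := he' u' (by simp)
      have a4 := he' v' (by simp)
      rcases h with ⟨q1, q2⟩ | ⟨q1, q2⟩
      · exact Or.inl ⟨hs _ _ a1 a3 q1, hs _ _ a2 a4 q2⟩
      · exact Or.inr ⟨hs _ _ a1 a4 q1, hs _ _ a2 a3 q2⟩
  have hX : ∀ ω, XSub H n₀ n ω ≤ ∑ c ∈ (Finset.univ.filter I), ind (ed c) ω := by
    intro ω
    rw [XSub, Set.ncard_eq_toFinset_card']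
    rw [sum_ind _ _ _ (fun c => ∀ e ∈ ed c, ω e = true) (fun _ => Iff.rfl), Finset.filter_filter]
    have : {c : SubCopyMap H n₀ n | IsGoodSubCopy H ω c}.toFinset ⊆
        Finset.univ.filter (fun c => I c ∧ ∀ e ∈ ed c, ω e = true) := by
      intro c hc
      simp only [Set.mem_toFinset] at hc
      exact Finset.mem_filter.2 ⟨Finset.mem_univ _, hgood c ω hc⟩
    exact_mod_cast Finset.card_le_card this
  calc _ ≤ expec n₀ n t k p (fun ω => ∑ c ∈ (Finset.univ.filter I), ind (ed c) ω) :=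
        expec_mono h0 h1 hX
    _ = ∑ c ∈ (Finset.univ.filter I), p ^ (ed c).card := by
        rw [expec_sum]; exact Finset.sum_congr rfl fun c _ => expec_ind _
    _ = ∑ c ∈ (Finset.univ.filter I), p ^ (H.f0.card + H.f1.card) :=
        Finset.sum_congr rfl fun c hc => by rw [hcard c (Finset.mem_filter.1 hc).2]
    _ = ((Finset.univ.filter I).card : ℝ) * p ^ (H.f0.card + H.f1.card) := by simp
    _ ≤ (Fintype.card (SubCopyMap H n₀ n) : ℝ) * p ^ (H.f0.card + H.f1.card) := by
        apply mul_le_mul_of_nonneg_right _ (by positivity)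
        exact_mod_cast Finset.card_le_univ _
    _ = _ := by rw [card_subcopy, pow_add]; push_cast; rfl

lemma expec_nonneg {p : ℝ} (h0 : 0 ≤ p) (h1 : p ≤ 1) {f : Omega n₀ n t k → ℝ} (h : ∀ ω, 0 ≤ f ω) :
    0 ≤ expec n₀ n t k p f :=
  Finset.sum_nonneg fun ω _ => mul_nonneg (wgt_nonneg h0 h1 ω) (h ω)

lemma heavy {p : ℝ} (h0 : 0 ≤ p) (h1 : p ≤ 1) (hn₀ : 1 ≤ n₀) (hn : 1 ≤ n)
    {c : CopyMap G n₀ n} (hc : CInj c) :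
    Heavy (wm n₀ n t k p) Clo (PhiV n₀ n p G) (items c) := by
  classical
  refine ⟨Clo_items c, fun S hS hcl hne => ?_⟩
  rw [prod_sub hc p hS]
  let H : Subpattern G :=
    { s0 := Finset.univ.filter fun a => Sum.inl (Sum.inl (c.f0 a)) ∈ S
      s := fun i => Finset.univ.filter fun b => Sum.inl (Sum.inr (i, c.f i b)) ∈ S
      f0 := G.e0.filter fun z => Sum.inr (emap c (Sum.inl z)) ∈ S
      f1 := G.e1.filter fun e => Sum.inr (emap c (Sum.inr e)) ∈ S
      f0sub := Finset.filter_subset _ _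
      f1sub := Finset.filter_subset _ _
      f0mem := by
        intro z hz
        have := hcl.1 _ _ _ (Finset.mem_filter.1 hz).2
        simpa using this
      f1mem := by
        intro e he y hy
        have := hcl.2 _ (Finset.mem_filter.1 he).2 (smap c.f y) (Sym2.mem_map.2 ⟨y, hy, rfl⟩)
        simpa [smap] using this }
  have hle := expec_XSub_le h0 h1 hn₀ hn H
  refine le_trans (csInf_le ?_ ⟨H, ?_, rfl⟩) hle
  · refine ⟨0, ?_⟩
    rintro x ⟨H', -, rfl⟩
    exact expec_nonneg h0 h1 fun ω => by unfold XSub; positivity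
  · -- nonempty vertex set
    have hv : ∃ v, Sum.inl v ∈ S := by
      obtain ⟨x, hx⟩ := hne
      rcases x with v | (⟨a, b, l⟩ | e)
      · exact ⟨v, hx⟩
      · exact ⟨_, (hcl.1 _ _ _ hx).1⟩
      · induction e using Sym2.ind with
        | _ u v => exact ⟨_, hcl.2 _ hx u (by simp)⟩
    obtain ⟨v, hv⟩ := hv
    have := hS hv
    simp only [items, vs, Finset.inl_mem_disjSum, Finset.mem_image, Finset.mem_univ, true_and] at this
    obtain ⟨(a | ⟨i, b⟩), rfl⟩ := this
    · exact Or.inl ⟨a, Finset.mem_filter.2 ⟨Finset.mem_univ _, hv⟩⟩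
    · exact Or.inr ⟨i, b, Finset.mem_filter.2 ⟨Finset.mem_univ _, hv⟩⟩

/-- the weight of `G` -/
noncomputable def muG (n₀ n : ℕ) (p : ℝ) (G : Pattern t k) : ℝ :=
  (n₀ : ℝ) ^ G.m0 * (∏ i, (n : ℝ) ^ (G.m i)) * (p ^ G.e0.card * p ^ G.e1.card)

lemma prod_items {c : CopyMap G n₀ n} (hc : CInj c) (p : ℝ) :
    ∏ x ∈ items c, wm n₀ n t k p x = muG n₀ n p G := by
  rw [prod_sub hc p (Finset.Subset.refl _), muG]
  have e1 : (Finset.univ.filter fun a => Sum.inl (Sum.inl (c.f0 a)) ∈ items c) = Finset.univ := by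
    apply Finset.filter_true_of_mem
    intro a _
    simp only [items, vs, Finset.inl_mem_disjSum, Finset.mem_image, Finset.mem_univ, true_and]
    exact ⟨Sum.inl a, rfl⟩
  have e2 : ∀ i, (Finset.univ.filter fun b => Sum.inl (Sum.inr (i, c.f i b)) ∈ items c)
      = Finset.univ := by
    intro i
    apply Finset.filter_true_of_mem
    intro b _
    simp only [items, vs, Finset.inl_mem_disjSum, Finset.mem_image, Finset.mem_univ, true_and]
    exact ⟨Sum.inr ⟨i, b⟩, rfl⟩
  have e3 : (G.e0.filter fun z => Sum.inr (emap c (Sum.inl z)) ∈ items c) = G.e0 := by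
    apply Finset.filter_true_of_mem
    intro z hz
    simp only [items, es, Finset.inr_mem_disjSum]
    exact Finset.mem_image_of_mem _ (Finset.inl_mem_disjSum.2 hz)
  have e4 : (G.e1.filter fun e => Sum.inr (emap c (Sum.inr e)) ∈ items c) = G.e1 := by
    apply Finset.filter_true_of_mem
    intro z hz
    simp only [items, es, Finset.inr_mem_disjSum]
    exact Finset.mem_image_of_mem _ (Finset.inr_mem_disjSum.2 hz)
  simp only [e1, e2, e3, e4, Finset.card_univ, Fintype.card_fin]

lemma card_es {c : CopyMap G n₀ n} (hc : CInj c) : (es c).card = G.e0.card + G.e1.card := by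
  rw [es, Finset.card_image_of_injective _ (emap_inj hc), edgesG, Finset.card_disjSum]

lemma pow_le_desc (n m : ℕ) (h : m ≤ n) : n ^ m ≤ m ^ m * n.descFactorial m := by
  rcases Nat.eq_zero_or_pos m with rfl | hm
  · simp
  calc n ^ m ≤ (m * (n + 1 - m)) ^ m := by
        apply Nat.pow_le_pow_left
        obtain ⟨d, rfl⟩ := Nat.exists_eq_add_of_le h
        have : m + d + 1 - m = d + 1 := by omega
        rw [this]; nlinarith
    _ = m ^ m * (n + 1 - m) ^ m := by rw [mul_pow]
    _ ≤ _ := Nat.mul_le_mul_left _ (Nat.pow_sub_le_descFactorial n m)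

open scoped Classical in
/-- all injective placements -/
noncomputable def allJ (G : Pattern t k) (n₀ n : ℕ) : Finset (CopyMap G n₀ n) :=
  Finset.univ.filter CInj

/-- constant -/
def kapN (G : Pattern t k) : ℕ := G.m0 ^ G.m0 * ∏ i, G.m i ^ G.m i

lemma kapN_pos (G : Pattern t k) : 0 < kapN G :=
  Nat.mul_pos (Nat.pow_self_pos) (Finset.prod_pos fun _ _ => Nat.pow_self_pos)

lemma card_allJ (h0 : G.m0 ≤ n₀) (h : ∀ i, G.m i ≤ n) :
    n₀ ^ G.m0 * ∏ i, n ^ (G.m i) ≤ kapN G * (allJ G n₀ n).card := by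
  classical
  have hcard : n₀.descFactorial G.m0 * ∏ i, n.descFactorial (G.m i) ≤ (allJ G n₀ n).card := by
    have : Fintype.card ((Fin G.m0 ↪ Fin n₀) × ((i : Fin t) → (Fin (G.m i) ↪ Fin n)))
        = n₀.descFactorial G.m0 * ∏ i, n.descFactorial (G.m i) := by
      simp [Fintype.card_embedding_eq]
    rw [← this, ← Finset.card_univ]
    apply Finset.card_le_card_of_injOn (fun x => (⟨x.1, fun i => x.2 i⟩ : CopyMap G n₀ n))
    · intro x _
      simp only [allJ, Finset.coe_filter, Finset.mem_univ, true_and]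
      exact ⟨x.1.injective, fun i => (x.2 i).injective⟩
    · rintro ⟨a, b⟩ _ ⟨a', b'⟩ _ h
      simp only [CopyMap.mk.injEq] at h
      obtain ⟨h1, h2⟩ := h
      ext1
      · exact DFunLike.coe_injective h1
      · funext i
        exact DFunLike.coe_injective (congrFun h2 i)
  calc _ ≤ (G.m0 ^ G.m0 * n₀.descFactorial G.m0) * ∏ i, (G.m i ^ G.m i * n.descFactorial (G.m i)) :=
        Nat.mul_le_mul (pow_le_desc _ _ h0) (Finset.prod_le_prod' fun i _ => pow_le_desc _ _ (h i))
    _ = kapN G * (n₀.descFactorial G.m0 * ∏ i, n.descFactorial (G.m i)) := by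
        rw [kapN, Finset.prod_mul_distrib]; ring
    _ ≤ _ := Nat.mul_le_mul_left _ hcard

end geom

end PartiteModel
namespace PartiteModel

section final
variable {t k : ℕ} {G : Pattern t k} {n₀ n : ℕ} {p : ℝ}

def szG (G : Pattern t k) (n₀ n : ℕ) : PV G → ℕ := Sum.elim (fun _ => n₀) (fun _ => n)

def iotaG (G : Pattern t k) (n₀ n : ℕ) : (x : PV G) → Fin (szG G n₀ n x) → HV n₀ n t
  | .inl _, a => .inl a
  | .inr y, b => .inr (y.1, b)

def TG (c : CopyMap G n₀ n) : (x : PV G) → Fin (szG G n₀ n x)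
  | .inl a => c.f0 a
  | .inr y => c.f y.1 y.2

lemma iota_T (c : CopyMap G n₀ n) (x : PV G) : iotaG G n₀ n x (TG c x) = vmap c x := by
  rcases x with a | y <;> rfl

lemma iota_inj (x : PV G) : Function.Injective (iotaG G n₀ n x) := by
  rcases x with a | y
  · intro u v h
    exact Sum.inl.inj h
  · intro u v h
    exact (Prod.mk.inj (Sum.inr.inj h)).2

lemma iota_w (x : PV G) (a) : wv n₀ n t (iotaG G n₀ n x a) = szG G n₀ n x := by
  rcases x with u | y <;> rfl

lemma T_inj : Function.Injective (TG : CopyMap G n₀ n → _) := by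
  rintro ⟨f0, f⟩ ⟨g0, g⟩ h
  have h1 : f0 = g0 := funext fun a => congrFun h (Sum.inl a)
  have h2 : f = g := funext fun i => funext fun b => congrFun h (Sum.inr ⟨i, b⟩)
  rw [h1, h2]

lemma prod_split (V : Finset (HV n₀ n t)) (E : Finset (EdgeSlot n₀ n t k)) :
    (∏ v ∈ V, wv n₀ n t v) * p ^ E.card = ∏ x ∈ V.disjSum E, wm n₀ n t k p x := by
  rw [Finset.prod_disjSum]
  simp [wm]

lemma items_union (c c' : CopyMap G n₀ n) :
    items c ∪ items c' = (vs c ∪ vs c').disjSum (es c ∪ es c') := by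
  ext (x | x) <;> simp only [items, Finset.mem_union, Finset.inl_mem_disjSum, Finset.inr_mem_disjSum]

def Meets (c c' : CopyMap G n₀ n) : Prop := (items c ∩ items c').Nonempty

instance : DecidableRel (Meets : CopyMap G n₀ n → CopyMap G n₀ n → Prop) :=
  fun c c' => inferInstanceAs (Decidable (items c ∩ items c').Nonempty)

noncomputable instance : DecidableEq (CopyMap G n₀ n) := Classical.decEq _

noncomputable def JJ (G : Pattern t k) (n₀ n : ℕ) : Finset (CopyMap G n₀ n × CopyMap G n₀ n) :=
  (allJ G n₀ n ×ˢ allJ G n₀ n).filter fun z => Meets z.1 z.2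

lemma mem_allJ {c : CopyMap G n₀ n} : c ∈ allJ G n₀ n ↔ CInj c := by
  simp [allJ]

lemma mem_JJ {z : CopyMap G n₀ n × CopyMap G n₀ n} :
    z ∈ JJ G n₀ n ↔ (CInj z.1 ∧ CInj z.2) ∧ Meets z.1 z.2 := by
  simp [JJ, mem_allJ]

noncomputable def es2 (z : CopyMap G n₀ n × CopyMap G n₀ n) : Finset (EdgeSlot n₀ n t k) :=
  es z.1 ∪ es z.2

def K2 (G : Pattern t k) : ℝ :=
  (Fintype.card (Bool × PV G) : ℝ) ^ (Fintype.card (Bool × PV G))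
def K4 (G : Pattern t k) : ℝ :=
  (Fintype.card (Bool × Bool × PV G) : ℝ) ^ (Fintype.card (Bool × Bool × PV G))

lemma K2_nonneg (G : Pattern t k) : 0 ≤ K2 G := by unfold K2; positivity
lemma K4_nonneg (G : Pattern t k) : 0 ≤ K4 G := by unfold K4; positivity

lemma wm_nonneg (h0 : 0 ≤ p) (x) : 0 ≤ wm n₀ n t k p x := by
  rcases x with (a | b) | e <;> simp [wm, wv, h0]

lemma sz_pos (hn₀ : 1 ≤ n₀) (hn : 1 ≤ n) (x : PV G) : 1 ≤ szG G n₀ n x := by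
  rcases x with a | b
  · exact hn₀
  · exact hn

lemma sum2 (h0 : 0 ≤ p) (h1 : p ≤ 1) (hn₀ : 1 ≤ n₀) (hn : 1 ≤ n) (hΦ : 1 ≤ PhiV n₀ n p G) :
    ∑ z ∈ JJ G n₀ n, p ^ (es2 z).card ≤ K2 G * (muG n₀ n p G ^ 2 / PhiV n₀ n p G) := by
  have hΦ0 : 0 < PhiV n₀ n p G := by linarith
  refine count_bound (I := Bool × PV G) (W := HV n₀ n t) (fun x => szG G n₀ n x.2) (wv n₀ n t)
    (fun x => iotaG G n₀ n x.2) (fun x => iota_inj x.2) (fun x a => iota_w x.2 a)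
    (fun x => sz_pos hn₀ hn x.2) (JJ G n₀ n)
    (fun z x => bif x.1 then TG z.1 x.2 else TG z.2 x.2) ?_ _ _ ?_ (by positivity)
  · rintro ⟨c, c'⟩ _ ⟨d, d'⟩ _ h
    have e1 : c = d := T_inj (funext fun x => congrFun h (true, x))
    have e2 : c' = d' := T_inj (funext fun x => congrFun h (false, x))
    rw [e1, e2]
  · intro z hz
    have hz := mem_JJ.1 hz
    have him : Finset.univ.image (fun x : Bool × PV G =>
        iotaG G n₀ n x.2 (bif x.1 then TG z.1 x.2 else TG z.2 x.2)) = vs z.1 ∪ vs z.2 := by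
      ext v
      simp only [vs, Finset.mem_image, Finset.mem_union, Finset.mem_univ, true_and, Prod.exists,
        Bool.exists_bool, cond_true, cond_false, iota_T]
      exact or_comm
    rw [him, es2, prod_split, ← items_union, le_div_iff₀ hΦ0]
    have := lat1 (wm_nonneg h0) Clo.inter (heavy h0 h1 hn₀ hn hz.1.1)
      (heavy h0 h1 hn₀ hn hz.1.2) hz.2
    rw [prod_items hz.1.1, prod_items hz.1.2] at this
    rw [pow_two]; exact this

lemma sum4 (h0 : 0 ≤ p) (h1 : p ≤ 1) (hn₀ : 1 ≤ n₀) (hn : 1 ≤ n) (hΦ : 1 ≤ PhiV n₀ n p G) :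
    ∑ y ∈ (JJ G n₀ n ×ˢ JJ G n₀ n).filter (fun y => (es2 y.1 ∩ es2 y.2).Nonempty),
      p ^ (es2 y.1 ∪ es2 y.2).card ≤ K4 G * (muG n₀ n p G ^ 4 / PhiV n₀ n p G ^ 3) := by
  have hΦ0 : 0 < PhiV n₀ n p G := by linarith
  refine count_bound (I := Bool × Bool × PV G) (W := HV n₀ n t) (fun x => szG G n₀ n x.2.2)
    (wv n₀ n t)
    (fun x => iotaG G n₀ n x.2.2) (fun x => iota_inj x.2.2) (fun x a => iota_w x.2.2 a)
    (fun x => sz_pos hn₀ hn x.2.2) _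
    (fun y x => bif x.1 then (bif x.2.1 then TG y.1.1 x.2.2 else TG y.1.2 x.2.2)
      else (bif x.2.1 then TG y.2.1 x.2.2 else TG y.2.2 x.2.2)) ?_ _ _ ?_ (by positivity)
  · rintro ⟨⟨c1, c2⟩, ⟨c3, c4⟩⟩ _ ⟨⟨d1, d2⟩, ⟨d3, d4⟩⟩ _ h
    have e1 : c1 = d1 := T_inj (funext fun x => congrFun h (true, true, x))
    have e2 : c2 = d2 := T_inj (funext fun x => congrFun h (true, false, x))
    have e3 : c3 = d3 := T_inj (funext fun x => congrFun h (false, true, x))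
    have e4 : c4 = d4 := T_inj (funext fun x => congrFun h (false, false, x))
    rw [e1, e2, e3, e4]
  · rintro ⟨⟨c1, c2⟩, ⟨c3, c4⟩⟩ hy
    rw [Finset.mem_filter, Finset.mem_product] at hy
    obtain ⟨⟨ha, hb⟩, hne⟩ := hy
    have ha := mem_JJ.1 ha
    have hb := mem_JJ.1 hb
    simp only at ha hb hne ⊢
    have him : Finset.univ.image (fun x : Bool × Bool × PV G =>
        iotaG G n₀ n x.2.2 (bif x.1 then (bif x.2.1 then TG c1 x.2.2 else TG c2 x.2.2)
      else (bif x.2.1 then TG c3 x.2.2 else TG c4 x.2.2)))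
        = (vs c1 ∪ vs c2) ∪ (vs c3 ∪ vs c4) := by
      ext v
      simp only [vs, Finset.mem_image, Finset.mem_union, Finset.mem_univ, true_and, Prod.exists,
        Bool.exists_bool, cond_true, cond_false, iota_T]
      tauto
    have hun : ((vs c1 ∪ vs c2) ∪ (vs c3 ∪ vs c4)).disjSum ((es c1 ∪ es c2) ∪ (es c3 ∪ es c4))
        = (items c1 ∪ items c2) ∪ (items c3 ∪ items c4) := by
      rw [items_union, items_union]
      ext (x | x) <;>
        simp only [Finset.mem_union, Finset.inl_mem_disjSum, Finset.inr_mem_disjSum]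
    rw [him, es2, es2, prod_split, hun, le_div_iff₀ (by positivity)]
    refine lat3 (wm_nonneg h0) Clo.inter Clo.union hΦ (heavy h0 h1 hn₀ hn ha.1.1)
      (heavy h0 h1 hn₀ hn ha.1.2) (heavy h0 h1 hn₀ hn hb.1.1) (heavy h0 h1 hn₀ hn hb.1.2)
      (prod_items ha.1.1 p) (prod_items ha.1.2 p) (prod_items hb.1.1 p) (prod_items hb.1.2 p)
      ha.2 hb.2 ?_
    obtain ⟨e, he⟩ := hne
    refine ⟨Sum.inr e, ?_⟩
    rw [items_union, items_union, Finset.mem_inter, Finset.inr_mem_disjSum, Finset.inr_mem_disjSum]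
    exact Finset.mem_inter.1 he

lemma card_le_DG (hne : Nonempty (PV G)) (ω : Omega n₀ n t k) (I : Finset (CopyMap G n₀ n))
    (hI : ∀ c ∈ I, IsGoodCopy G ω c)
    (hd : ∀ c ∈ I, ∀ c' ∈ I, c ≠ c' → ¬ Meets c c') : I.card ≤ DG G n₀ n ω := by
  apply le_csSup
  · refine ⟨Fintype.card (CopyMap G n₀ n), ?_⟩
    rintro d ⟨F, -, hF⟩
    have hinj : Function.Injective F := by
      intro i j hij
      by_contra hne'
      have := hF i j hne'
      rw [hij] at this
      obtain ⟨a | ⟨i, b⟩⟩ := hne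
      · exact this.1 a a rfl
      · exact this.2 i b b rfl
    simpa using Fintype.card_le_of_injective F hinj
  · refine ⟨fun j => (I.equivFin.symm j).1, fun j => hI _ (I.equivFin.symm j).2, ?_⟩
    intro i j hij
    have hne' : (I.equivFin.symm i).1 ≠ (I.equivFin.symm j).1 := fun h =>
      hij (I.equivFin.symm.injective (Subtype.ext h))
    have hm := hd _ (I.equivFin.symm i).2 _ (I.equivFin.symm j).2 hne'
    set c := (I.equivFin.symm i).1
    set c' := (I.equivFin.symm j).1
    have hv : ∀ x y, vmap c x ≠ vmap c' y := by
      intro x y h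
      apply hm
      refine ⟨Sum.inl (vmap c x), Finset.mem_inter.2 ⟨?_, ?_⟩⟩
      · exact Finset.inl_mem_disjSum.2 (Finset.mem_image_of_mem _ (Finset.mem_univ _))
      · rw [h]
        exact Finset.inl_mem_disjSum.2 (Finset.mem_image_of_mem _ (Finset.mem_univ _))
    exact ⟨fun a a' h => hv (Sum.inl a) (Sum.inl a') (congrArg Sum.inl h),
      fun i b b' h => hv (Sum.inr ⟨i, b⟩) (Sum.inr ⟨i, b'⟩) (by
        beta_reduce at h
        simp [vmap, smap]
        exact h)⟩

lemma DG_bound (hne : Nonempty (PV G)) (ω : Omega n₀ n t k) :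
    (∑ c ∈ allJ G n₀ n, ind (es c) ω) ^ 2
      ≤ 4 * (DG G n₀ n ω : ℝ) * ∑ z ∈ JJ G n₀ n, ind (es2 z) ω := by
  classical
  set X := (allJ G n₀ n).filter (fun c => ∀ e ∈ es c, ω e = true) with hX
  rw [sum_ind _ _ _ (fun c => ∀ e ∈ es c, ω e = true) (fun _ => Iff.rfl),
    sum_ind _ _ _ (fun z : CopyMap G n₀ n × CopyMap G n₀ n =>
      (∀ e ∈ es z.1, ω e = true) ∧ (∀ e ∈ es z.2, ω e = true))
      (fun z => by simp only [es2, Finset.mem_union, or_imp, forall_and])]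
  obtain ⟨I, hIX, hI, hb⟩ := indep_bound X (Meets : CopyMap G n₀ n → CopyMap G n₀ n → Prop)
    (by
      intro c
      obtain ⟨x⟩ := hne
      refine ⟨Sum.inl (vmap c x), Finset.mem_inter.2 ⟨?_, ?_⟩⟩ <;>
      exact Finset.inl_mem_disjSum.2 (Finset.mem_image_of_mem _ (Finset.mem_univ _)))
    (by
      intro a b h
      rwa [Meets, Finset.inter_comm])
  have hD : I.card ≤ DG G n₀ n ω := by
    apply card_le_DG hne ω I _ hI
    intro c hc
    have := Finset.mem_filter.1 (hIX hc)
    exact (good_iff ω c).2 ⟨mem_allJ.1 this.1, this.2⟩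
  have hs : (X ×ˢ X).filter (fun z => Meets z.1 z.2) = (JJ G n₀ n).filter
      (fun z => (∀ e ∈ es z.1, ω e = true) ∧ (∀ e ∈ es z.2, ω e = true)) := by
    ext z
    simp only [JJ, hX, Finset.mem_filter, Finset.mem_product]
    tauto
  rw [hs] at hb
  refine hb.trans ?_
  have : (I.card : ℝ) ≤ DG G n₀ n ω := by exact_mod_cast hD
  gcongr

lemma main_fin (h0 : 0 ≤ p) (h1 : p ≤ 1) (hn₀ : 1 ≤ n₀) (hn : 1 ≤ n) (hm0 : G.m0 ≤ n₀)
    (hm : ∀ i, G.m i ≤ n) (hne : Nonempty (PV G)) (hΦ : 1 ≤ PhiV n₀ n p G) :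
    1 - (4 * (kapN G : ℝ) ^ 2 * K2 G + K4 G) / PhiV n₀ n p G ≤
      prOmega n₀ n t k p (fun ω =>
        1 / (16 * (kapN G : ℝ) ^ 2 * (K2 G + 1)) * PhiV n₀ n p G ≤ (DG G n₀ n ω : ℝ)) := by
  classical
  have hs2 := sum2 h0 h1 hn₀ hn hΦ
  have hs4 := sum4 h0 h1 hn₀ hn hΦ
  have hcJ := card_allJ hm0 hm
  have hk2 := K2_nonneg G
  have hk4 := K4_nonneg G
  have hκ : (0:ℝ) < kapN G := by exact_mod_cast kapN_pos G
  have hVX := var_bound (p := p) h0 (allJ G n₀ n) es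
  have hVN := var_bound (p := p) h0 (JJ G n₀ n) es2
  have hJne : (allJ G n₀ n).Nonempty := by
    rw [← Finset.card_pos]
    by_contra h
    have h : (allJ G n₀ n).card = 0 := by omega
    rw [h, mul_zero] at hcJ
    have : 0 < n₀ ^ G.m0 * ∏ i, n ^ (G.m i) :=
      Nat.mul_pos (pow_pos hn₀ _) (Finset.prod_pos fun i _ => pow_pos hn _)
    omega
  have hμ : 0 < muG n₀ n p G := by
    obtain ⟨c, hc⟩ := hJne
    have hc := mem_allJ.1 hc
    have := (heavy h0 h1 hn₀ hn hc).2 _ (Finset.Subset.refl _) (Clo_items c) (by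
      obtain ⟨x⟩ := hne
      exact ⟨Sum.inl (vmap c x), Finset.inl_mem_disjSum.2
        (Finset.mem_image_of_mem _ (Finset.mem_univ _))⟩)
    rw [prod_items hc] at this
    linarith
  have hEX : muG n₀ n p G ≤ kapN G * ∑ c ∈ allJ G n₀ n, p ^ (es c).card := by
    have : ∑ c ∈ allJ G n₀ n, p ^ (es c).card
        = (allJ G n₀ n).card * (p ^ G.e0.card * p ^ G.e1.card) := by
      rw [Finset.sum_congr rfl fun c hc => by rw [card_es (mem_allJ.1 hc)]]
      simp [pow_add]
    rw [this, muG, ← mul_assoc (kapN G : ℝ)]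
    apply mul_le_mul_of_nonneg_right _ (by positivity)
    exact_mod_cast hcJ
  have hVX' : ∑ z ∈ (allJ G n₀ n ×ˢ allJ G n₀ n).filter
      (fun z => (es z.1 ∩ es z.2).Nonempty), p ^ (es z.1 ∪ es z.2).card
      ≤ ∑ z ∈ JJ G n₀ n, p ^ (es2 z).card := by
    apply Finset.sum_le_sum_of_subset_of_nonneg
    · intro z hz
      rw [Finset.mem_filter] at hz
      refine Finset.mem_filter.2 ⟨hz.1, ?_⟩
      obtain ⟨e, he⟩ := hz.2
      rw [Finset.mem_inter] at he
      exact ⟨Sum.inr e, Finset.mem_inter.2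
        ⟨Finset.inr_mem_disjSum.2 he.1, Finset.inr_mem_disjSum.2 he.2⟩⟩
    · intro z _ _; positivity
  have hX := hVX.trans (hVX'.trans hs2)
  have hN := hVN.trans hs4
  clear hVX hVN hVX' hs4 hcJ
  have hDG := fun ω : Omega n₀ n t k => DG_bound hne ω
  set Φ := PhiV n₀ n p G
  set μ := muG n₀ n p G
  set κ : ℝ := (kapN G : ℝ) with hκdef
  set EX := ∑ c ∈ allJ G n₀ n, p ^ (es c).card
  set EN := ∑ z ∈ JJ G n₀ n, p ^ (es2 z).card
  have hΦ0 : 0 < Φ := by linarith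
  let Z : Omega n₀ n t k → ℝ := fun ω =>
    (4 * κ ^ 2 / μ ^ 2) * (∑ c ∈ allJ G n₀ n, ind (es c) ω - EX) ^ 2
    + (Φ ^ 2 / μ ^ 4) * (∑ z ∈ JJ G n₀ n, ind (es2 z) ω - EN) ^ 2
  have hEZ : expec n₀ n t k p Z ≤ (4 * κ ^ 2 * K2 G + K4 G) / Φ := by
    simp only [Z]
    rw [expec_add, expec_smul, expec_smul]
    calc _ ≤ (4 * κ ^ 2 / μ ^ 2) * (K2 G * (μ ^ 2 / Φ))
          + (Φ ^ 2 / μ ^ 4) * (K4 G * (μ ^ 4 / Φ ^ 3)) := by gcongr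
      _ = _ := by field_simp
  refine le_trans (by linarith) (pr_ge h0 h1 _ Z (fun ω => by simp only [Z]; positivity) ?_)
  intro ω hS
  by_contra hZ
  apply hS
  push Not at hZ
  simp only [Z] at hZ
  have hd := hDG ω
  set X := ∑ c ∈ allJ G n₀ n, ind (es c) ω
  set N := ∑ z ∈ JJ G n₀ n, ind (es2 z) ω
  have hZ1 : (4 * κ ^ 2 / μ ^ 2) * (X - EX) ^ 2 < 1 := by
    have : 0 ≤ (Φ ^ 2 / μ ^ 4) * (N - EN) ^ 2 := by positivity
    linarith
  have hZ2 : (Φ ^ 2 / μ ^ 4) * (N - EN) ^ 2 < 1 := by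
    have : 0 ≤ (4 * κ ^ 2 / μ ^ 2) * (X - EX) ^ 2 := by positivity
    linarith
  have hx : μ < 2 * κ * X := by
    have e : (2 * κ * (X - EX)) ^ 2 < μ ^ 2 := by
      have : (4 * κ ^ 2 / μ ^ 2) * (X - EX) ^ 2 = (2 * κ * (X - EX)) ^ 2 / μ ^ 2 := by ring
      rw [this, div_lt_one (by positivity)] at hZ1
      exact hZ1
    have := (abs_lt_of_sq_lt_sq' e hμ.le).1
    nlinarith
  have hnn : Φ * N ≤ (K2 G + 1) * μ ^ 2 := by
    have e : (Φ * (N - EN)) ^ 2 < (μ ^ 2) ^ 2 := by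
      have : (Φ ^ 2 / μ ^ 4) * (N - EN) ^ 2 = (Φ * (N - EN)) ^ 2 / (μ ^ 2) ^ 2 := by ring
      rw [this, div_lt_one (by positivity)] at hZ2
      exact hZ2
    have h3 := (abs_lt_of_sq_lt_sq' e (by positivity)).2
    have h4 : EN * Φ ≤ K2 G * μ ^ 2 := by
      rw [← mul_div_assoc, le_div_iff₀ hΦ0] at hs2
      exact hs2
    nlinarith
  set D : ℝ := (DG G n₀ n ω : ℝ)
  have hD0 : 0 ≤ D := Nat.cast_nonneg _
  have hx2 : μ ^ 2 ≤ 4 * κ ^ 2 * X ^ 2 := by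
    calc μ ^ 2 ≤ (2 * κ * X) ^ 2 := pow_le_pow_left₀ hμ.le hx.le 2
      _ = _ := by ring
  have hfin : Φ * μ ^ 2 ≤ (16 * κ ^ 2 * (K2 G + 1) * D) * μ ^ 2 := by
    calc Φ * μ ^ 2 ≤ Φ * (4 * κ ^ 2 * X ^ 2) := by gcongr
      _ ≤ Φ * (4 * κ ^ 2 * (4 * D * N)) := by gcongr
      _ = 16 * κ ^ 2 * D * (Φ * N) := by ring
      _ ≤ 16 * κ ^ 2 * D * ((K2 G + 1) * μ ^ 2) := by gcongr
      _ = _ := by ring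
  have := le_of_mul_le_mul_right hfin (by positivity)
  rw [one_div_mul_eq_div, div_le_iff₀ (by positivity)]
  linarith

lemma PhiV_nonneg (h0 : 0 ≤ p) (h1 : p ≤ 1) : 0 ≤ PhiV n₀ n p G := by
  apply Real.sInf_nonneg
  rintro x ⟨H', -, rfl⟩
  exact expec_nonneg h0 h1 fun ω => by unfold XSub; positivity

lemma nonempty_of_PhiV (h : 1 ≤ PhiV n₀ n p G) : Nonempty (PV G) := by
  by_contra hne
  have : {x : ℝ | ∃ H : Subpattern G, (H.s0.Nonempty ∨ ∃ i, (H.s i).Nonempty) ∧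
    x = expec n₀ n t k p (XSub H n₀ n)} = ∅ := by
    rw [Set.eq_empty_iff_forall_notMem]
    rintro x ⟨H, ⟨a, _⟩ | ⟨i, b, _⟩, _⟩
    · exact hne ⟨Sum.inl a⟩
    · exact hne ⟨Sum.inr ⟨i, b⟩⟩
  rw [PhiV, this, Real.sInf_empty] at h
  linarith

end final

end PartiteModel

open PartiteModel

/-- Let `G` be a fixed labelled `(t+1)`-partite multigraph pattern and
consider the random multigraph `𝒢(n₀,n,t,k,p)` with `n₀ = n₀(n)`.  Suppose that
`Φ_G^v → ∞` as `n → ∞`.  Then there is a constant `c > 0` (depending only on `G`) such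
that with probability `1 - O(1/Φ_G^v)` we have `D_G ≥ c·Φ_G^v`. -/
theorem many_disjoint_copies (t k : ℕ) (ht : 1 ≤ t) (hk : 2 ≤ k) (G : Pattern t k)
    (n₀ : ℕ → ℕ) (p : ℕ → ℝ)
    (hn₀ : ∀ n, 1 ≤ n₀ n) (hp : ∀ n, 0 ≤ p n ∧ p n ≤ 1)
    (hsize : ∀ᶠ n in atTop, G.m0 ≤ n₀ n ∧ ∀ i, G.m i ≤ n)
    (hPhiV : Tendsto (fun n => PhiV (n₀ n) n (p n) G) atTop atTop) :
    ∃ c : ℝ, 0 < c ∧ ∃ C : ℝ, 0 < C ∧ ∀ n : ℕ,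
      1 - C / PhiV (n₀ n) n (p n) G ≤
        prOmega (n₀ n) n t k (p n) (fun ω =>
          c * PhiV (n₀ n) n (p n) G ≤ (DG G (n₀ n) n ω : ℝ)) := by
  obtain ⟨N, hN⟩ := eventually_atTop.1
    (hsize.and ((hPhiV.eventually_ge_atTop 1).and (eventually_ge_atTop 1)))
  have hk2 := K2_nonneg G
  have hk4 := K4_nonneg G
  have hκ : (0:ℝ) < kapN G := by exact_mod_cast kapN_pos G
  have hΦ0 : ∀ n, 0 ≤ PhiV (n₀ n) n (p n) G := fun n => PhiV_nonneg (hp n).1 (hp n).2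
  have hs0 : 0 ≤ ∑ n ∈ Finset.range N, PhiV (n₀ n) n (p n) G :=
    Finset.sum_nonneg fun n _ => hΦ0 n
  have hC1 : 0 ≤ 4 * (kapN G : ℝ) ^ 2 * K2 G + K4 G := by positivity
  refine ⟨1 / (16 * (kapN G : ℝ) ^ 2 * (K2 G + 1)), by positivity,
    (4 * (kapN G : ℝ) ^ 2 * K2 G + K4 G) + ∑ n ∈ Finset.range N, PhiV (n₀ n) n (p n) G + 1,
    by positivity, fun n => ?_⟩
  by_cases hn : N ≤ n
  · obtain ⟨⟨hm0, hm⟩, h1, hn1⟩ := hN n hn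
    refine le_trans ?_ (main_fin (hp n).1 (hp n).2 (hn₀ n) hn1 hm0 hm (nonempty_of_PhiV h1) h1)
    apply sub_le_sub_left
    apply div_le_div_of_nonneg_right _ (hΦ0 n)
    linarith
  · rcases (hΦ0 n).eq_or_lt with h | h
    · rw [← h, div_zero, sub_zero]
      have := pr_ge (hp n).1 (hp n).2 (fun ω : Omega (n₀ n) n t k =>
          1 / (16 * (kapN G : ℝ) ^ 2 * (K2 G + 1)) * 0 ≤ (DG G (n₀ n) n ω : ℝ)) (fun _ => 0)
        (fun _ => le_rfl) (fun ω hω => absurd (by rw [mul_zero]; positivity) hω)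
      simpa [expec] using this
    · have hle : PhiV (n₀ n) n (p n) G ≤ ∑ n ∈ Finset.range N, PhiV (n₀ n) n (p n) G :=
        Finset.single_le_sum (f := fun n => PhiV (n₀ n) n (p n) G) (fun n _ => hΦ0 n)
          (Finset.mem_range.2 (by omega))
      have : 1 ≤ ((4 * (kapN G : ℝ) ^ 2 * K2 G + K4 G)
          + ∑ n ∈ Finset.range N, PhiV (n₀ n) n (p n) G + 1) / PhiV (n₀ n) n (p n) G := by
        rw [le_div_iff₀ h]; linarith
      refine le_trans (b := 0) (by linarith) ?_
      apply Finset.sum_nonneg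
      intro ω _
      split_ifs
      · exact wgt_nonneg (hp n).1 (hp n).2 ω
      · exact le_rfl
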